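/- Under the stated setup and assumptions, the canonical angles ν_1 ≤ … ≤ ν_k between the column spaces of V_k and V̂ satisfy sin ν_j ≤ γ_j^{2q+2}·‖Ω_2Ω_1†‖₂ / √(1 + γ_j^{4q+4}·‖Ω_2Ω_1†‖₂²) for every j = 1,…,k. -/

import Mathlib

open scoped ENNReal
open Matrix

/-- The `j`-th largest singular value (0-indexed) of a complex matrix,
obtained as the decreasingly sorted square roots of the eigenvalues of `Mᴴ * M`. -/
noncomputable def sval {m n : ℕ} (M : Matrix (Fin m) (Fin n) ℂ) (j : ℕ) : ℝ :=
  (List.insertionSort (· ≥ ·)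
    ((List.ofFn (Matrix.isHermitian_conjTranspose_mul_self M).eigenvalues).map Real.sqrt)).getD j 0

/-- The Schatten-`p` norm (`p = ∞` gives the spectral norm). -/
noncomputable def schatten {m n : ℕ} (p : ℝ≥0∞) (M : Matrix (Fin m) (Fin n) ℂ) : ℝ :=
  if p = ⊤ then sval M 0
  else (∑ j ∈ Finset.range n, sval M j ^ p.toReal) ^ (1 / p.toReal)

/-- Moore–Penrose pseudoinverse of a full-row-rank matrix. -/
noncomputable def rpinv {a b : ℕ} (M : Matrix (Fin a) (Fin b) ℂ) : Matrix (Fin b) (Fin a) ℂ :=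
  Mᴴ * (M * Mᴴ)⁻¹

/-- Rectangular diagonal matrix with entries `σ (off), σ (off+1), …` on the diagonal. -/
noncomputable def diagRect (σ : ℕ → ℝ) (off a b : ℕ) : Matrix (Fin a) (Fin b) ℂ :=
  Matrix.of fun i j => if (i : ℕ) = (j : ℕ) then (σ (off + (i : ℕ)) : ℂ) else 0

/-- The first `b` columns of a matrix with `b + c` columns. -/
def colsL {a b c : ℕ} (M : Matrix (Fin a) (Fin (b + c)) ℂ) : Matrix (Fin a) (Fin b) ℂ :=
  M.submatrix id (Fin.castAdd c)

/-- The last `c` columns of a matrix with `b + c` columns. -/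
def colsR {a b c : ℕ} (M : Matrix (Fin a) (Fin (b + c)) ℂ) : Matrix (Fin a) (Fin c) ℂ :=
  M.submatrix id (Fin.natAdd b)

/-!
Put `p = q + 1`. Since `range V̂` contains `range ((A*A)^p Ω)` and `Ω₁ Ω₁† = 1`, every `x` in the
span of the first `j` coordinate vectors of `ℂᵏ` yields a vector `V_k x + w` of `range V̂` with
`w ∈ range V_⊥` and `‖w‖ ≤ γ_j^{2p} ‖Ω₂ Ω₁†‖ ‖x‖`: invert the leading eigenvalues `σ_i^{2p}` of
`(A*A)^p` (at least `σ_j^{2p}`) and apply the trailing ones (at most `σ_{k+1}^{2p}`). As `w` is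
orthogonal to `V_k x`, the angle between `V_k x` and `range V̂` has tangent at most
`γ_j^{2p} ‖Ω₂ Ω₁†‖`, and the Courant–Fischer principle turns this bound on a `j`-dimensional
subspace into one on the `j`-th smallest canonical angle.
-/

section OrthonormalBasis
open Module

variable {ι 𝕜 E : Type*} [Fintype ι] [RCLike 𝕜] [NormedAddCommGroup E] [InnerProductSpace 𝕜 E]

theorem finrank_span_image_orthonormalBasis (b : OrthonormalBasis ι 𝕜 E) (s : Finset ι) :
    finrank 𝕜 (Submodule.span 𝕜 (b '' s)) = s.card := by
  classical
  rw [← Finset.coe_image, finrank_span_finset_eq_card, Finset.card_image_of_injective]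
  · exact b.orthonormal.linearIndependent.injective
  · rw [Finset.coe_image]
    exact b.orthonormal.linearIndependent.linearIndepOn_id.mono (Set.image_subset_range _ _)

theorem repr_eq_zero_of_mem_span_image (b : OrthonormalBasis ι 𝕜 E) {s : Set ι} {x : E}
    (hx : x ∈ Submodule.span 𝕜 (b '' s)) {i : ι} (hi : i ∉ s) : b.repr x i = 0 := by
  rw [← b.coe_toBasis, Basis.mem_span_image] at hx
  simpa using fun h => hi (hx (Finsupp.mem_support_iff.mpr h))

end OrthonormalBasis

section SingularValues
open Module

variable {𝕜 E F : Type*} [RCLike 𝕜]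
  [NormedAddCommGroup E] [InnerProductSpace 𝕜 E] [FiniteDimensional 𝕜 E]
  [NormedAddCommGroup F] [InnerProductSpace 𝕜 F] [FiniteDimensional 𝕜 F]

/-- An orthonormal basis of right singular vectors of `T`, i.e. of eigenvectors of `T† T`, in the
order of `T.singularValues`. -/
noncomputable def rightSingularBasis (T : E →ₗ[𝕜] F) :
    OrthonormalBasis (Fin (finrank 𝕜 E)) 𝕜 E :=
  T.isSymmetric_adjoint_comp_self.eigenvectorBasis rfl

theorem norm_sq_apply_eq_sum_singularValues (T : E →ₗ[𝕜] F) (x : E) :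
    ‖T x‖ ^ 2 = ∑ i : Fin (finrank 𝕜 E),
      T.singularValues i ^ 2 * ‖(rightSingularBasis T).repr x i‖ ^ 2 := by
  have hcoord (i : Fin (finrank 𝕜 E)) :
      (rightSingularBasis T).repr (T.adjoint (T x)) i =
        (T.singularValues i ^ 2 : ℝ) * (rightSingularBasis T).repr x i := by
    rw [T.sq_singularValues_fin rfl]
    exact T.isSymmetric_adjoint_comp_self.eigenvectorBasis_apply_self_apply rfl x i
  have hinner : ((‖T x‖ ^ 2 : ℝ) : 𝕜) = inner 𝕜 x (T.adjoint (T x)) := by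
    rw [T.adjoint_inner_right, inner_self_eq_norm_sq_to_K, RCLike.ofReal_pow]
  rw [← (rightSingularBasis T).repr.inner_map_map, PiLp.inner_apply] at hinner
  simp only [hcoord, RCLike.inner_apply, mul_assoc, RCLike.mul_conj] at hinner
  exact_mod_cast hinner

theorem norm_apply_le_singularValues_zero_mul (T : E →ₗ[𝕜] F) (x : E) :
    ‖T x‖ ≤ T.singularValues 0 * ‖x‖ := by
  refine le_of_sq_le_sq ?_ (mul_nonneg (T.singularValues_nonneg 0) (norm_nonneg x))
  rw [norm_sq_apply_eq_sum_singularValues, mul_pow, ← (rightSingularBasis T).repr.norm_map x,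
    EuclideanSpace.norm_sq_eq, Finset.mul_sum]
  gcongr with i
  · exact T.singularValues_nonneg i
  · exact T.singularValues_antitone (Nat.zero_le i)

theorem singularValues_mul_norm_le_norm_apply (T : E →ₗ[𝕜] F) {j : Fin (finrank 𝕜 E)} {x : E}
    (hx : x ∈ Submodule.span 𝕜 (rightSingularBasis T '' Finset.Iic j)) :
    T.singularValues j * ‖x‖ ≤ ‖T x‖ := by
  refine le_of_sq_le_sq ?_ (norm_nonneg _)
  rw [norm_sq_apply_eq_sum_singularValues, mul_pow, ← (rightSingularBasis T).repr.norm_map x,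
    EuclideanSpace.norm_sq_eq, Finset.mul_sum]
  refine Finset.sum_le_sum fun i _ => ?_
  by_cases hij : i ≤ j
  · gcongr
    · exact T.singularValues_nonneg j
    · exact T.singularValues_antitone hij
  · simp [repr_eq_zero_of_mem_span_image _ hx (by simpa using hij)]

theorem singularValues_le_of_forall_mem_norm_le (T : E →ₗ[𝕜] F) {S : Submodule 𝕜 E} {j : ℕ}
    (hS : finrank 𝕜 E ≤ j + finrank 𝕜 S) {c : ℝ} (hc : 0 ≤ c) (h : ∀ x ∈ S, ‖T x‖ ≤ c * ‖x‖) :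
    T.singularValues j ≤ c := by
  obtain hj | hj := le_or_gt (finrank 𝕜 E) j
  · rwa [T.singularValues_of_finrank_le hj]
  set L := Submodule.span 𝕜 (rightSingularBasis T '' Finset.Iic (⟨j, hj⟩ : Fin (finrank 𝕜 E)))
  have hL : finrank 𝕜 L = j + 1 := by
    rw [finrank_span_image_orthonormalBasis, Fin.card_Iic]
  have hmeet : ¬ Disjoint L S := fun hdisj => by
    have := Submodule.finrank_add_finrank_le_of_disjoint hdisj
    omega
  obtain ⟨x, hxLS, hx0⟩ := Submodule.exists_mem_ne_zero_of_ne_bot (disjoint_iff.not.mp hmeet)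
  exact le_of_mul_le_mul_right
    ((singularValues_mul_norm_le_norm_apply T hxLS.1).trans (h x hxLS.2)) (norm_pos_iff.mpr hx0)

end SingularValues

section CanonicalAngles
open Module

variable {𝕜 E F : Type*} [RCLike 𝕜] [NormedAddCommGroup E] [InnerProductSpace 𝕜 E]
  [NormedAddCommGroup F] [InnerProductSpace 𝕜 F]

theorem norm_starProjection_orthogonal_le_norm_sub (K : Submodule 𝕜 E)
    [K.HasOrthogonalProjection] (v : E) {y : E} (hy : y ∈ K) : ‖Kᗮ.starProjection v‖ ≤ ‖v - y‖ := by
  calc ‖Kᗮ.starProjection v‖ = ‖Kᗮ.starProjection (v - y)‖ := by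
        rw [map_sub, Submodule.starProjection_orthogonal_apply_eq_zero hy, sub_zero]
    _ ≤ ‖v - y‖ := Submodule.norm_starProjection_apply_le _ _

theorem norm_starProjection_orthogonal_le_of_add_mem {K : Submodule 𝕜 E}
    [K.HasOrthogonalProjection] {v w : E} {f : ℝ} (hvw : inner 𝕜 v w = 0) (hK : v + w ∈ K)
    (hw : ‖w‖ ≤ f * ‖v‖) : ‖Kᗮ.starProjection v‖ ≤ f / √(1 + f ^ 2) * ‖v‖ := by
  -- When `‖w‖ = f * ‖v‖`, the multiple of `v + w` nearest to `v` is `c • (v + w)`.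
  set c : ℝ := 1 / (1 + f ^ 2)
  have hbound_nonneg : 0 ≤ f / √(1 + f ^ 2) * ‖v‖ := by
    rw [div_mul_eq_mul_div]
    exact div_nonneg ((norm_nonneg w).trans hw) (Real.sqrt_nonneg _)
  refine (norm_starProjection_orthogonal_le_norm_sub K v
    (K.smul_mem (c : 𝕜) hK)).trans (le_of_sq_le_sq ?_ hbound_nonneg)
  have hsplit : v - (c : 𝕜) • (v + w) = ((1 - c : ℝ) : 𝕜) • v + ((-c : ℝ) : 𝕜) • w := by
    push_cast
    module
  have horth : inner 𝕜 (((1 - c : ℝ) : 𝕜) • v) (((-c : ℝ) : 𝕜) • w) = 0 := by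
    simp [inner_smul_left, inner_smul_right, hvw]
  calc ‖v - (c : 𝕜) • (v + w)‖ ^ 2 = (1 - c) ^ 2 * ‖v‖ ^ 2 + c ^ 2 * ‖w‖ ^ 2 := by
        rw [hsplit, sq, norm_add_sq_eq_norm_sq_add_norm_sq_of_inner_eq_zero _ _ horth]
        simp only [norm_smul, RCLike.norm_ofReal, ← sq, mul_pow, sq_abs, neg_sq]
    _ ≤ (1 - c) ^ 2 * ‖v‖ ^ 2 + c ^ 2 * (f * ‖v‖) ^ 2 := by gcongr
    _ = (f / √(1 + f ^ 2) * ‖v‖) ^ 2 := by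
        rw [mul_pow _ ‖v‖, mul_pow _ ‖v‖, div_pow f, Real.sq_sqrt (by positivity)]
        simp only [c]
        field_simp
        ring

variable [FiniteDimensional 𝕜 E] [FiniteDimensional 𝕜 F]

theorem singularValues_starProjection_orthogonal_comp_le (K : Submodule 𝕜 E) (T : F →ₗᵢ[𝕜] E)
    {S : Submodule 𝕜 F} {j : ℕ} (hS : finrank 𝕜 F ≤ j + finrank 𝕜 S) {f : ℝ} (hf : 0 ≤ f)
    (h : ∀ x ∈ S, ∃ w, inner 𝕜 (T x) w = 0 ∧ T x + w ∈ K ∧ ‖w‖ ≤ f * ‖x‖) :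
    (Kᗮ.starProjection.toLinearMap ∘ₗ T.toLinearMap).singularValues j ≤ f / √(1 + f ^ 2) := by
  refine singularValues_le_of_forall_mem_norm_le _ hS (by positivity) fun x hx => ?_
  obtain ⟨w, horth, hK, hw⟩ := h x hx
  rw [← T.norm_map x] at hw ⊢
  exact norm_starProjection_orthogonal_le_of_add_mem horth hK hw

end CanonicalAngles

section MatrixSingularValues

theorem insertionSort_ofFn_comp_equiv {α : Type*} [LinearOrder α] {m n : ℕ} {f : Fin n → α}
    (hf : Antitone f) (e : Fin m ≃ Fin n) :
    (List.ofFn (f ∘ e)).insertionSort (· ≥ ·) = List.ofFn f := by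
  obtain rfl : m = n := Fin.equiv_iff_eq.mp ⟨e⟩
  exact List.Perm.eq_of_sortedGE (List.pairwise_insertionSort _ _).sortedGE hf.sortedGE_ofFn
    ((List.perm_insertionSort _ _).trans (Equiv.Perm.ofFn_comp_perm e f))

theorem sval_eq_singularValues {m n : ℕ} (M : Matrix (Fin m) (Fin n) ℂ) (j : ℕ) :
    sval M j = (toEuclideanLin M).singularValues j := by
  have hM := isHermitian_conjTranspose_mul_self M
  set T := toEuclideanLin M
  set σ : Fin (Fintype.card (Fin n)) → ℝ := fun i => T.singularValues i with hσ
  set e := (Fintype.equivOfCardEq (α := Fin (Fintype.card (Fin n))) (Fintype.card_fin _)).symm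
  have hcomp : T.adjoint ∘ₗ T = toEuclideanLin (Mᴴ * M) := by
    rw [toLpLin_mul_same, toEuclideanLin_conjTranspose_eq_adjoint]
  have hsqrt : Real.sqrt ∘ hM.eigenvalues = σ ∘ e := by
    ext i
    simp only [hσ, Function.comp_apply, T.singularValues_fin finrank_euclideanSpace, hcomp]
    rfl
  have hanti : Antitone σ := fun _ _ h => T.singularValues_antitone h
  rw [sval, List.map_ofFn, hsqrt, insertionSort_ofFn_comp_equiv hanti]
  obtain hj | hj := lt_or_ge j (Fintype.card (Fin n))
  · rw [List.getD_eq_getElem _ _ (by simpa using hj), List.getElem_ofFn]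
  · rw [List.getD_eq_default _ _ (by simpa using hj), T.singularValues_of_finrank_le]
    simpa using hj

end MatrixSingularValues

section OrthonormalColumns

variable {𝕜 m n l : Type*} [RCLike 𝕜] [Fintype m] [Fintype n] [DecidableEq n] [Fintype l]
  [DecidableEq l]

theorem inner_toEuclideanLin_toEuclideanLin (M : Matrix m n 𝕜) (N : Matrix m l 𝕜)
    (x : EuclideanSpace 𝕜 n) (y : EuclideanSpace 𝕜 l) :
    inner 𝕜 (toEuclideanLin M x) (toEuclideanLin N y) =
      inner 𝕜 x (toEuclideanLin (Mᴴ * N) y) := by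
  classical
  rw [toLpLin_mul_same, toEuclideanLin_conjTranspose_eq_adjoint, LinearMap.comp_apply,
    LinearMap.adjoint_inner_right]

/-- The isometric embedding `x ↦ M x` of Euclidean spaces given by a matrix `M` with orthonormal
columns. -/
noncomputable def euclideanIsometry (M : Matrix m n 𝕜) (hM : Mᴴ * M = 1) :
    EuclideanSpace 𝕜 n →ₗᵢ[𝕜] EuclideanSpace 𝕜 m :=
  (toEuclideanLin M).isometryOfInner fun x y => by
    rw [inner_toEuclideanLin_toEuclideanLin, hM, toLpLin_one, LinearMap.id_apply]

theorem toEuclideanLin_one_sub_mul_conjTranspose [DecidableEq m] {W : Matrix m n 𝕜}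
    (hW : Wᴴ * W = 1) :
    toEuclideanLin (1 - W * Wᴴ) =
      (LinearMap.range (toEuclideanLin W))ᗮ.starProjection.toLinearMap := by
  have hres (v : EuclideanSpace 𝕜 m) :
      toEuclideanLin (1 - W * Wᴴ) v = v - toEuclideanLin (W * Wᴴ) v := by
    rw [map_sub, toLpLin_one, LinearMap.sub_apply, LinearMap.id_apply]
  have hkill : (1 - W * Wᴴ)ᴴ * W = 0 := by
    simp [Matrix.sub_mul, Matrix.mul_assoc, hW]
  have hproj (v : EuclideanSpace 𝕜 m) :
      (LinearMap.range (toEuclideanLin W)).starProjection v = toEuclideanLin (W * Wᴴ) v := by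
    refine Submodule.eq_starProjection_of_mem_of_inner_eq_zero ?_ ?_
    · rw [toLpLin_mul_same]
      exact LinearMap.mem_range_self _ _
    · rintro _ ⟨y, rfl⟩
      rw [← hres, inner_toEuclideanLin_toEuclideanLin, hkill, map_zero, LinearMap.zero_apply,
        inner_zero_right]
  ext1 v
  rw [hres, ContinuousLinearMap.coe_coe, Submodule.starProjection_orthogonal_val, hproj]

end OrthonormalColumns

section Diagonal

variable {𝕜 n : Type*} [RCLike 𝕜] [Fintype n] [DecidableEq n]

theorem toEuclideanLin_diagonal_apply (d : n → 𝕜) (y : EuclideanSpace 𝕜 n) (i : n) :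
    toEuclideanLin (diagonal d) y i = d i * y i :=
  mulVec_diagonal d y i

theorem norm_toEuclideanLin_diagonal_le {d : n → 𝕜} {r : ℝ} (hd : ∀ i, ‖d i‖ ≤ r) (hr : 0 ≤ r)
    (y : EuclideanSpace 𝕜 n) : ‖toEuclideanLin (diagonal d) y‖ ≤ r * ‖y‖ := by
  refine le_of_sq_le_sq ?_ (mul_nonneg hr (norm_nonneg y))
  rw [mul_pow, EuclideanSpace.norm_sq_eq, EuclideanSpace.norm_sq_eq, Finset.mul_sum]
  refine Finset.sum_le_sum fun i _ => ?_
  rw [toEuclideanLin_diagonal_apply, norm_mul, mul_pow]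
  gcongr
  exact hd i

theorem exists_toEuclideanLin_diagonal_eq {d : n → 𝕜} {s : ℝ} (hs : 0 < s)
    {x : EuclideanSpace 𝕜 n} (hd : ∀ i, x i ≠ 0 → s ≤ ‖d i‖) :
    ∃ z, toEuclideanLin (diagonal d) z = x ∧ ‖z‖ ≤ s⁻¹ * ‖x‖ := by
  have hcancel (i : n) : d i * ((d i)⁻¹ * x i) = x i := by
    by_cases hi : x i = 0
    · simp [hi]
    · exact mul_inv_cancel_left₀ (norm_pos_iff.mp (hs.trans_le (hd i hi))) _
  set z : EuclideanSpace 𝕜 n := WithLp.toLp 2 fun i => (d i)⁻¹ * x i with hz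
  refine ⟨z, ?_, le_of_sq_le_sq ?_ (by positivity)⟩
  · ext i
    rw [toEuclideanLin_diagonal_apply, hcancel]
  · rw [mul_pow, EuclideanSpace.norm_sq_eq, EuclideanSpace.norm_sq_eq, Finset.mul_sum]
    refine Finset.sum_le_sum fun i _ => ?_
    by_cases hi : x i = 0
    · simp [hz, hi]
    · rw [norm_mul, norm_inv, mul_pow]
      gcongr
      exact hd i hi

end Diagonal

section BlockDiagonalization

variable {𝕜 n ι κ l : Type*} [RCLike 𝕜] [Fintype n] [DecidableEq n] [Fintype ι] [DecidableEq ι]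
  [Fintype κ] [Fintype l]

theorem mul_mul_eq_add_of_intertwines {G : Matrix n n 𝕜} {V₁ : Matrix n ι 𝕜} {V₂ : Matrix n κ 𝕜}
    {D₁ : Matrix ι ι 𝕜} {D₂ : Matrix κ κ 𝕜} (hV : V₁ * V₁ᴴ + V₂ * V₂ᴴ = 1)
    (hG₁ : G * V₁ = V₁ * D₁) (hG₂ : G * V₂ = V₂ * D₂) {Ω : Matrix n l 𝕜} {P : Matrix l ι 𝕜}
    (hP : V₁ᴴ * Ω * P = 1) :
    G * Ω * P = V₁ * D₁ + V₂ * (D₂ * (V₂ᴴ * Ω * P)) := by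
  calc G * Ω * P = G * (V₁ * V₁ᴴ + V₂ * V₂ᴴ) * Ω * P := by rw [hV, Matrix.mul_one]
    _ = G * V₁ * (V₁ᴴ * Ω * P) + G * V₂ * (V₂ᴴ * Ω * P) := by
      simp only [Matrix.mul_add, Matrix.add_mul, Matrix.mul_assoc]
    _ = V₁ * D₁ + V₂ * (D₂ * (V₂ᴴ * Ω * P)) := by
      rw [hP, hG₁, hG₂, Matrix.mul_one, Matrix.mul_assoc V₂]

variable [DecidableEq κ] [DecidableEq l]

theorem exists_add_mem_range_toEuclideanLin {G : Matrix n n 𝕜} {V₁ : Matrix n ι 𝕜}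
    {V₂ : Matrix n κ 𝕜} {d₁ : ι → 𝕜} {d₂ : κ → 𝕜} (hV : V₁ * V₁ᴴ + V₂ * V₂ᴴ = 1)
    (hV₁₂ : V₁ᴴ * V₂ = 0) (hV₂ : V₂ᴴ * V₂ = 1) (hG₁ : G * V₁ = V₁ * diagonal d₁)
    (hG₂ : G * V₂ = V₂ * diagonal d₂) {Ω : Matrix n l 𝕜} {P : Matrix l ι 𝕜}
    (hP : V₁ᴴ * Ω * P = 1) {r s : ℝ} (hr : 0 ≤ r) (hs : 0 < s) (hd₂ : ∀ i, ‖d₂ i‖ ≤ r)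
    {x : EuclideanSpace 𝕜 ι} (hd₁ : ∀ i, x i ≠ 0 → s ≤ ‖d₁ i‖) :
    ∃ w, inner 𝕜 (toEuclideanLin V₁ x) w = 0 ∧
      toEuclideanLin V₁ x + w ∈ LinearMap.range (toEuclideanLin (G * Ω)) ∧
      ‖w‖ ≤ r / s * (toEuclideanLin (V₂ᴴ * Ω * P)).singularValues 0 * ‖x‖ := by
  obtain ⟨z, hzx, hz⟩ := exists_toEuclideanLin_diagonal_eq hs hd₁
  set T := toEuclideanLin (V₂ᴴ * Ω * P)
  set u := toEuclideanLin (diagonal d₂) (T z)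
  refine ⟨toEuclideanLin V₂ u, ?_, ⟨toEuclideanLin P z, ?_⟩, ?_⟩
  · rw [inner_toEuclideanLin_toEuclideanLin, hV₁₂, map_zero, LinearMap.zero_apply,
      inner_zero_right]
  · rw [← LinearMap.comp_apply, ← toLpLin_mul_same, mul_mul_eq_add_of_intertwines hV hG₁ hG₂ hP]
    simp only [map_add, toLpLin_mul_same, LinearMap.add_apply, LinearMap.comp_apply, hzx, u, T]
  · calc ‖toEuclideanLin V₂ u‖ = ‖u‖ := (euclideanIsometry V₂ hV₂).norm_map u
      _ ≤ r * ‖T z‖ := norm_toEuclideanLin_diagonal_le hd₂ hr _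
      _ ≤ r * (T.singularValues 0 * (s⁻¹ * ‖x‖)) := by
        gcongr
        exact (norm_apply_le_singularValues_zero_mul T z).trans
          (mul_le_mul_of_nonneg_left hz (T.singularValues_nonneg 0))
      _ = r / s * T.singularValues 0 * ‖x‖ := by ring

end BlockDiagonalization

section RangeFinder
open Module

variable {𝕜 n ι κ l r : Type*} [RCLike 𝕜] [Fintype n] [DecidableEq n] [Fintype ι] [DecidableEq ι]
  [Fintype κ] [DecidableEq κ] [Fintype l] [Fintype r] [DecidableEq r]

theorem singularValues_one_sub_mul_conjTranspose_mul_le {G : Matrix n n 𝕜} {V₁ : Matrix n ι 𝕜}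
    {V₂ : Matrix n κ 𝕜} {d₁ : ι → 𝕜} {d₂ : κ → 𝕜} (hV : V₁ * V₁ᴴ + V₂ * V₂ᴴ = 1)
    (hV₁ : V₁ᴴ * V₁ = 1) (hV₁₂ : V₁ᴴ * V₂ = 0) (hV₂ : V₂ᴴ * V₂ = 1)
    (hG₁ : G * V₁ = V₁ * diagonal d₁) (hG₂ : G * V₂ = V₂ * diagonal d₂) {Ω : Matrix n l 𝕜}
    {P : Matrix l ι 𝕜} (hP : V₁ᴴ * Ω * P = 1) {W : Matrix n r 𝕜} (hW : Wᴴ * W = 1)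
    {C : Matrix r l 𝕜} (hC : G * Ω = W * C) {a b : ℝ} (ha : 0 ≤ a) (hb : 0 < b)
    (hd₂ : ∀ i, ‖d₂ i‖ ≤ a) {I : Finset ι} (hd₁ : ∀ i ∈ I, b ≤ ‖d₁ i‖) {j : ℕ}
    (hj : Fintype.card ι ≤ j + I.card) {f : ℝ}
    (hf : f = a / b * (toEuclideanLin (V₂ᴴ * Ω * P)).singularValues 0) :
    (toEuclideanLin ((1 - W * Wᴴ) * V₁)).singularValues j ≤ f / √(1 + f ^ 2) := by
  classical
  have hf₀ : 0 ≤ f := hf ▸ mul_nonneg (div_nonneg ha hb.le) (LinearMap.singularValues_nonneg _ 0)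
  have hS := finrank_span_image_orthonormalBasis (EuclideanSpace.basisFun ι 𝕜) I
  rw [toLpLin_mul_same, toEuclideanLin_one_sub_mul_conjTranspose hW]
  refine singularValues_starProjection_orthogonal_comp_le _ (euclideanIsometry V₁ hV₁)
    (S := Submodule.span 𝕜 (EuclideanSpace.basisFun ι 𝕜 '' I)) ?_ hf₀ fun x hx => ?_
  · rwa [hS, finrank_euclideanSpace]
  have hd₁x (i : ι) (hi : x i ≠ 0) : b ≤ ‖d₁ i‖ :=
    hd₁ i <| of_not_not fun hiI => hi <| repr_eq_zero_of_mem_span_image _ hx hiI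
  obtain ⟨w, horth, hmem, hw⟩ :=
    exists_add_mem_range_toEuclideanLin hV hV₁₂ hV₂ hG₁ hG₂ hP ha hb hd₂ hd₁x
  rw [← hf] at hw
  rw [hC, toLpLin_mul_same] at hmem
  exact ⟨w, horth, LinearMap.range_comp_le_range _ _ hmem, hw⟩

end RangeFinder

section PowerScheme

variable {𝕜 m n l r s : Type*} [RCLike 𝕜] [Fintype m] [Fintype n] [DecidableEq n]

theorem conjTranspose_mul_self_pow_mul_eq_mul_diagonal [Fintype r] [DecidableEq r]
    {A : Matrix m n 𝕜} {U : Matrix m r 𝕜} {D : Matrix r n 𝕜} {V : Matrix n n 𝕜} (hU : Uᴴ * U = 1)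
    (hV : Vᴴ * V = 1) (hA : A = U * D * Vᴴ) {d : n → 𝕜} (hD : Dᴴ * D = diagonal d) (p : ℕ) :
    (Aᴴ * A) ^ p * V = V * diagonal (d ^ p) := by
  have hsemiconj : SemiconjBy V (diagonal d) (Aᴴ * A) := by
    calc V * diagonal d = V * (Dᴴ * (Uᴴ * U) * D) * (Vᴴ * V) := by
          rw [hU, hV, Matrix.mul_one, Matrix.mul_one, hD]
      _ = Aᴴ * A * V := by
        simp only [hA, conjTranspose_mul, conjTranspose_conjTranspose, Matrix.mul_assoc]
  rw [← diagonal_pow]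
  exact (hsemiconj.pow_right p).eq.symm

variable [DecidableEq m]

theorem conjTranspose_mul_mul_conjTranspose_pow_mul (A : Matrix m n 𝕜) (q : ℕ) :
    Aᴴ * ((A * Aᴴ) ^ q * A) = (Aᴴ * A) ^ (q + 1) := by
  induction q with
  | zero => simp
  | succ q ih =>
    rw [pow_succ (Aᴴ * A), ← ih, pow_succ (A * Aᴴ)]
    simp only [Matrix.mul_assoc]

theorem conjTranspose_mul_self_pow_mul_eq_of_factorization [Fintype r] [Fintype s]
    {A : Matrix m n 𝕜} {Ω : Matrix n l 𝕜} {Q : Matrix m s 𝕜} {R : Matrix s l 𝕜} {q : ℕ}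
    (hQR : (A * Aᴴ) ^ q * A * Ω = Q * R) {L : Matrix s r 𝕜} {W : Matrix n r 𝕜}
    (hB : Qᴴ * A = L * Wᴴ) : (Aᴴ * A) ^ (q + 1) * Ω = W * (Lᴴ * R) := by
  have hAQ : Aᴴ * Q = W * Lᴴ := by
    simpa only [conjTranspose_mul, conjTranspose_conjTranspose] using congrArg conjTranspose hB
  rw [← conjTranspose_mul_mul_conjTranspose_pow_mul, Matrix.mul_assoc, hQR, ← Matrix.mul_assoc,
    hAQ, Matrix.mul_assoc]

end PowerScheme

section ColumnBlocks

variable {a b c : ℕ}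

theorem colsL_mul_conjTranspose_add_colsR (M : Matrix (Fin a) (Fin (b + c)) ℂ) :
    colsL M * (colsL M)ᴴ + colsR M * (colsR M)ᴴ = M * Mᴴ := by
  ext i j
  simp [mul_apply, colsL, colsR, Fin.sum_univ_add]

theorem conjTranspose_colsL_mul_colsL {M : Matrix (Fin a) (Fin (b + c)) ℂ} (hM : Mᴴ * M = 1) :
    (colsL M)ᴴ * colsL M = 1 := by
  calc (colsL M)ᴴ * colsL M = (Mᴴ * M).submatrix (Fin.castAdd c) (Fin.castAdd c) := rfl
    _ = 1 := by rw [hM, submatrix_one _ (Fin.castAdd_injective b c)]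

theorem conjTranspose_colsR_mul_colsR {M : Matrix (Fin a) (Fin (b + c)) ℂ} (hM : Mᴴ * M = 1) :
    (colsR M)ᴴ * colsR M = 1 := by
  calc (colsR M)ᴴ * colsR M = (Mᴴ * M).submatrix (Fin.natAdd b) (Fin.natAdd b) := rfl
    _ = 1 := by rw [hM, submatrix_one _ (Fin.natAdd_injective c b)]

theorem conjTranspose_colsL_mul_colsR {M : Matrix (Fin a) (Fin (b + c)) ℂ} (hM : Mᴴ * M = 1) :
    (colsL M)ᴴ * colsR M = 0 := by
  calc (colsL M)ᴴ * colsR M = (Mᴴ * M).submatrix (Fin.castAdd c) (Fin.natAdd b) := rfl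
    _ = 0 := by
      ext i j
      simp [hM, one_apply, Fin.ext_iff, show (i : ℕ) ≠ b + j by omega]

theorem mul_colsL_of_mul_eq {G : Matrix (Fin a) (Fin a) ℂ} {M : Matrix (Fin a) (Fin (b + c)) ℂ}
    {d : Fin (b + c) → ℂ} (hG : G * M = M * diagonal d) :
    G * colsL M = colsL M * diagonal (d ∘ Fin.castAdd c) := by
  calc G * colsL M = (G * M).submatrix id (Fin.castAdd c) := rfl
    _ = colsL M * diagonal (d ∘ Fin.castAdd c) := by
      ext i j
      simp [hG, colsL]

theorem mul_colsR_of_mul_eq {G : Matrix (Fin a) (Fin a) ℂ} {M : Matrix (Fin a) (Fin (b + c)) ℂ}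
    {d : Fin (b + c) → ℂ} (hG : G * M = M * diagonal d) :
    G * colsR M = colsR M * diagonal (d ∘ Fin.natAdd b) := by
  calc G * colsR M = (G * M).submatrix id (Fin.natAdd b) := rfl
    _ = colsR M * diagonal (d ∘ Fin.natAdd b) := by
      ext i j
      simp [hG, colsR]

end ColumnBlocks

section PseudoinverseAndDiagRect

open scoped ComplexOrder in
theorem mul_rpinv_of_rank_eq {a b : ℕ} {M : Matrix (Fin a) (Fin b) ℂ} (hM : M.rank = a) :
    M * rpinv M = 1 := by
  have hrange : LinearMap.range (M * Mᴴ).mulVecLin = ⊤ := by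
    refine Submodule.eq_top_of_finrank_eq ?_
    rw [Module.finrank_fin_fun]
    exact (rank_self_mul_conjTranspose M).trans hM
  have hunit : IsUnit (M * Mᴴ) :=
    mulVec_surjective_iff_isUnit.mp (LinearMap.range_eq_top.mp hrange)
  rw [rpinv, ← Matrix.mul_assoc]
  exact mul_nonsing_inv _ ((isUnit_iff_isUnit_det _).mp hunit)

theorem conjTranspose_diagRect_mul_self (σ : ℕ → ℝ) (a b : ℕ) :
    (diagRect σ 0 a b)ᴴ * diagRect σ 0 a b =
      diagonal fun i : Fin b => if (i : ℕ) < a then (σ i : ℂ) ^ 2 else 0 := by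
  ext i j
  simp only [mul_apply, diagonal_apply, diagRect, conjTranspose_apply, of_apply, zero_add]
  by_cases hi : (i : ℕ) < a
  · have hli (l : Fin a) (hl : l ≠ ⟨i, hi⟩) : (l : ℕ) ≠ i := fun h => hl (Fin.ext h)
    rw [Finset.sum_eq_single_of_mem ⟨i, hi⟩ (Finset.mem_univ _)
      fun l _ hl => by simp [hli l hl]]
    obtain rfl | hij := eq_or_ne i j
    · simp [hi, sq]
    · simp [hij, Fin.val_ne_of_ne hij]
  · have hli (l : Fin a) : (l : ℕ) ≠ i := fun h => hi (h ▸ l.isLt)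
    simp [hi, hli]

end PseudoinverseAndDiagRect

theorem canonical_angles_right_general {k m m₂ n₂ l r : ℕ} (p : ℕ)
    (A : Matrix (Fin m) (Fin (k + n₂)) ℂ) (U : Matrix (Fin m) (Fin (k + m₂)) ℂ)
    (V : Matrix (Fin (k + n₂)) (Fin (k + n₂)) ℂ) (σ : ℕ → ℝ) (hU : Uᴴ * U = 1)
    (hV : Vᴴ * V = 1) (hσ₀ : ∀ i, 0 ≤ σ i) (hσ : Antitone σ)
    (hA : A = U * diagRect σ 0 (k + m₂) (k + n₂) * Vᴴ) (Ω : Matrix (Fin (k + n₂)) (Fin l) ℂ)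
    (hΩ : ((colsL V)ᴴ * Ω).rank = k) (W : Matrix (Fin (k + n₂)) (Fin r) ℂ) (hW : Wᴴ * W = 1)
    (C : Matrix (Fin r) (Fin l) ℂ) (hC : (Aᴴ * A) ^ p * Ω = W * C) (j : Fin k) (hj : 0 < σ j) :
    sval ((1 - W * Wᴴ) * colsL V) (k - 1 - j) ≤
      (σ k / σ j) ^ (2 * p) * sval ((colsR V)ᴴ * Ω * rpinv ((colsL V)ᴴ * Ω)) 0 /
        √(1 + (σ k / σ j) ^ (4 * p) *
          sval ((colsR V)ᴴ * Ω * rpinv ((colsL V)ᴴ * Ω)) 0 ^ 2) := by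
  have hV' : V * Vᴴ = 1 := mul_eq_one_comm.mp hV
  set d : Fin (k + n₂) → ℂ := fun i => if (i : ℕ) < k + m₂ then (σ i : ℂ) ^ 2 else 0 with hd
  have hG : (Aᴴ * A) ^ p * V = V * diagonal (d ^ p) :=
    conjTranspose_mul_self_pow_mul_eq_mul_diagonal hU hV hA
      (conjTranspose_diagRect_mul_self σ _ _) p
  have hlead (i : Fin k) (hi : i ∈ Finset.Iic j) :
      σ j ^ (2 * p) ≤ ‖((d ^ p) ∘ Fin.castAdd n₂) i‖ := by
    have hik : (i : ℕ) < k + m₂ := by omega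
    have hij : σ j ≤ σ i := hσ (Fin.le_def.mp (Finset.mem_Iic.mp hi))
    simpa [hd, hik, pow_mul] using by gcongr
  have htail (i : Fin n₂) : ‖((d ^ p) ∘ Fin.natAdd k) i‖ ≤ σ k ^ (2 * p) := by
    have hki : σ (k + i) ≤ σ k := hσ (Nat.le_add_right k i)
    have hdi : ‖d (Fin.natAdd k i)‖ ≤ σ k ^ 2 := by
      simp only [hd, Fin.val_natAdd]
      split_ifs
      · simpa using pow_le_pow_left₀ (hσ₀ _) hki 2
      · simpa using sq_nonneg (σ k)
    simpa [pow_mul] using pow_le_pow_left₀ (norm_nonneg _) hdi p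
  have hsin := singularValues_one_sub_mul_conjTranspose_mul_le
    ((colsL_mul_conjTranspose_add_colsR V).trans hV') (conjTranspose_colsL_mul_colsL hV)
    (conjTranspose_colsL_mul_colsR hV) (conjTranspose_colsR_mul_colsR hV) (mul_colsL_of_mul_eq hG)
    (mul_colsR_of_mul_eq hG) (mul_rpinv_of_rank_eq hΩ) hW hC (pow_nonneg (hσ₀ k) _) (pow_pos hj _)
    htail hlead (j := k - 1 - j) (by rw [Fintype.card_fin, Fin.card_Iic]; omega) rfl
  simp only [sval_eq_singularValues]
  convert hsin using 3
  all_goals ring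

/-- Theorem 3.1 (right singular subspace): bounds for the canonical angles
`ν_1 ≤ … ≤ ν_k` between the column spaces of `V_k` and `V̂`. -/
theorem canonical_angles_right
    {k m₂ n₂ ρ : ℕ} (q : ℕ) (hk : 1 ≤ k)
    (A : Matrix (Fin (k + m₂)) (Fin (k + n₂)) ℂ)
    (U : Matrix (Fin (k + m₂)) (Fin (k + m₂)) ℂ)
    (V : Matrix (Fin (k + n₂)) (Fin (k + n₂)) ℂ)
    (σ : ℕ → ℝ)
    (hU : Uᴴ * U = 1) (hU' : U * Uᴴ = 1)
    (hV : Vᴴ * V = 1) (hV' : V * Vᴴ = 1)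
    (hσ0 : ∀ i, 0 ≤ σ i) (hσm : ∀ i j, i ≤ j → σ j ≤ σ i)
    (hA : A = U * diagRect σ 0 (k + m₂) (k + n₂) * Vᴴ)
    (hrank : 0 < σ (k - 1)) (hgap : σ k < σ (k - 1))
    (Ω : Matrix (Fin (k + n₂)) (Fin (k + ρ)) ℂ)
    (hΩ : ((colsL V)ᴴ * Ω).rank = k)
    (Q : Matrix (Fin (k + m₂)) (Fin (k + ρ)) ℂ)
    (R : Matrix (Fin (k + ρ)) (Fin (k + ρ)) ℂ)
    (hQ : Qᴴ * Q = 1) (hR : R.BlockTriangular id)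
    (hQR : (A * Aᴴ) ^ q * A * Ω = Q * R)
    (UB : Matrix (Fin (k + ρ)) (Fin (k + ρ)) ℂ)
    (Vh : Matrix (Fin (k + n₂)) (Fin (k + ρ)) ℂ)
    (σh : ℕ → ℝ)
    (hUB : UBᴴ * UB = 1) (hUB' : UB * UBᴴ = 1)
    (hVh : Vhᴴ * Vh = 1)
    (hσh0 : ∀ i, 0 ≤ σh i) (hσhm : ∀ i j, i ≤ j → σh j ≤ σh i)
    (hB : Qᴴ * A = UB * diagRect σh 0 (k + ρ) (k + ρ) * Vhᴴ)
    :
    ∀ j : Fin k,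
      sval ((1 - Vh * Vhᴴ) * colsL V) (k - 1 - (j : ℕ)) ≤
        (σ k / σ (j : ℕ)) ^ (2 * q + 2) * sval ((colsR V)ᴴ * Ω * rpinv ((colsL V)ᴴ * Ω)) 0 /
          Real.sqrt (1 + (σ k / σ (j : ℕ)) ^ (4 * q + 4) * (sval ((colsR V)ᴴ * Ω * rpinv ((colsL V)ᴴ * Ω)) 0) ^ 2) := by
  intro j
  have hj : 0 < σ j := hrank.trans_le (hσm _ _ (by omega))
  exact canonical_angles_right_general (q + 1) A U V σ hU hV hσ0 (fun i j => hσm i j) hA Ω hΩ Vh hVh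
    _ (conjTranspose_mul_self_pow_mul_eq_of_factorization hQR hB) j hj
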